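/- Let k, l ≥ 2 be multiplicatively independent integers, let u ∈ Σ_k* and v ∈ Σ_l* be words beginning with nonzero digits, and let t ≥ 0 be an integer. Then the set A = { n ∈ ℕ : (n)_k = u x 0^{t+1} for some x ∈ Σ_k* and (n)_l = v y 0^{t+1} for some y ∈ Σ_l* } has positive upper density; more precisely, d̄(A) ≥ ε/(1 + ε k^{t+1} l^{t+1}) where ε = 1/(k^{|u|+t+2} l^{|v|+t+2}). -/

import Mathlib

open Filter

/-- The upper density of a set of natural numbers:
`limsup_{n → ∞} |A ∩ [0,n)| / n`. -/
noncomputable def upperDensity (A : Set ℕ) : ℝ :=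
  limsup (fun n : ℕ => (Nat.card ↥(A ∩ Set.Iio n) : ℝ) / n) atTop

/-- The base-`k` representation of `n` as a word over `Σ_k = Fin k`, read starting
from the leading digit, with no leading zeros (junk value `[]` if `k ≤ 1`;
the representation of `0` is the empty word). -/
def kRepr (k n : ℕ) : List (Fin k) :=
  if h : 1 < k then
    (Nat.digits k n).reverse.pmap (fun d hd => (⟨d, hd⟩ : Fin k))
      (fun d hd => Nat.digits_lt_base h (List.mem_reverse.mp hd))
  else []

/-- Run a deterministic automaton with transition function `δ` from the state `s`
on the word `w`, reading `w` from the left: the extended transition function `δ*`. -/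
def run {S : Type*} {k : ℕ} (δ : S → Fin k → S) (s : S) (w : List (Fin k)) : S :=
  w.foldl δ s

/-- A sequence `a : ℕ → Ω` is `k`-automatic if it is produced by a deterministic
finite automaton with output, reading the base-`k` representation of the input
starting from the leading digit. -/
def IsAutomatic {Ω : Type*} (k : ℕ) (a : ℕ → Ω) : Prop :=
  ∃ (S : Type) (_ : Fintype S) (δ : S → Fin k → S) (s₀ : S) (τ : S → Ω),
    ∀ n : ℕ, a n = τ (run δ s₀ (kRepr k n))

/-- Two integers are multiplicatively independent if no nontrivial powers of them
coincide (equivalently, they are not both powers of a common integer). -/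
def MultIndep (k l : ℕ) : Prop :=
  ∀ i j : ℕ, k ^ i = l ^ j → i = 0 ∧ j = 0

/-- The finite word `w` occurs in the sequence `a` at position `i`. -/
def OccursAt {Ω : Type*} (a : ℕ → Ω) (w : List Ω) (i : ℕ) : Prop :=
  ∀ (j : ℕ) (h : j < w.length), w.get ⟨j, h⟩ = a (i + j)

/-- The finite word `w` is a factor of the sequence `a`. -/
def IsFactor {Ω : Type*} (a : ℕ → Ω) (w : List Ω) : Prop :=
  ∃ i : ℕ, OccursAt a w i

/-- A sequence is uniformly recurrent if each of its factors occurs in it with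
bounded gaps. -/
def UniformlyRecurrent {Ω : Type*} (a : ℕ → Ω) : Prop :=
  ∀ w : List Ω, IsFactor a w →
    ∃ C : ℕ, ∀ N : ℕ, ∃ i : ℕ, N ≤ i ∧ i ≤ N + C ∧ OccursAt a w i

/-- A strongly connected component of an automaton: a nonempty set of states closed
under all transitions and such that each of its states can be reached from each
other one by some word. -/
def IsSCC {S : Type*} {k : ℕ} (δ : S → Fin k → S) (C : Set S) : Prop :=
  C.Nonempty ∧ (∀ s ∈ C, ∀ u : Fin k, δ s u ∈ C) ∧
    ∀ s ∈ C, ∀ s' ∈ C, ∃ w : List (Fin k), run δ s w = s'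

lemma irrational_log_div_log {k l : ℕ} (hk : 2 ≤ k) (hl : 2 ≤ l) (hind : MultIndep k l) :
    Irrational (Real.log k / Real.log l) := by
  have hk0 : 0 < Real.log k := Real.log_pos (by exact_mod_cast hk)
  have hl0 : 0 < Real.log l := Real.log_pos (by exact_mod_cast hl)
  rintro ⟨q, hq⟩
  have hqpos : 0 < q := by
    have : (0 : ℝ) < q := hq ▸ div_pos hk0 hl0
    exact_mod_cast this
  have hnum : ((q.num.toNat : ℕ) : ℤ) = q.num := Int.toNat_of_nonneg (Rat.num_pos.2 hqpos).le
  have hden : (0 : ℝ) < q.den := by exact_mod_cast q.den_pos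
  have hlog : (q.den : ℝ) * Real.log k = (q.num.toNat : ℝ) * Real.log l := by
    have hcast : (q.num.toNat : ℝ) = (q.num : ℝ) := by exact_mod_cast hnum
    rw [hcast]
    rw [Rat.cast_def] at hq
    field_simp at hq
    linarith
  have hpow : (k : ℝ) ^ q.den = (l : ℝ) ^ q.num.toNat := by
    apply Real.log_injOn_pos
    · exact Set.mem_Ioi.2 (by positivity)
    · exact Set.mem_Ioi.2 (by positivity)
    · rw [Real.log_pow, Real.log_pow, hlog]
  exact q.den_nz (hind _ _ (by exact_mod_cast hpow)).1

/-- For `x / y` irrational, differences of large natural multiples of `x` and `y` are dense. -/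
lemma exists_nat_mul_sub_nat_mul_mem_Ioo {x y : ℝ} (hx : 0 < x) (hy : 0 < y)
    (hxy : Irrational (x / y)) {a b : ℝ} (hab : a < b) (N : ℕ) :
    ∃ i j : ℕ, N ≤ i ∧ N ≤ j ∧ i * x - j * y ∈ Set.Ioo a b := by
  have : Fact (0 < y) := ⟨hy⟩
  have hdense : DenseRange (fun n : ℤ => n • (x : AddCircle y)) :=
    AddCircle.denseRange_zsmul_coe_iff.2 hxy
  have hcluster : MapClusterPt (((a + b) / 2 : ℝ) : AddCircle y) atTop
      (fun n : ℕ => n • (x : AddCircle y)) :=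
    ((mapClusterPt_atTop_nsmul_tfae _ _).out 0 3).2 (hdense _)
  have hnhds : (fun r : ℝ => (r : AddCircle y)) '' Set.Ioo a b ∈
      nhds (((a + b) / 2 : ℝ) : AddCircle y) :=
    (QuotientAddGroup.isOpenMap_coe _ isOpen_Ioo).mem_nhds
      ⟨_, ⟨by linarith, by linarith⟩, rfl⟩
  have hlarge : ∀ᶠ i : ℕ in atTop, N * y + b ≤ i * x :=
    (tendsto_natCast_atTop_atTop.atTop_mul_const hx).eventually_ge_atTop _
  obtain ⟨i, ⟨r, hr, hri⟩, hi, hNi⟩ :=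
    ((mapClusterPt_iff_frequently.1 hcluster _ hnhds).and_eventually
      (hlarge.and (eventually_ge_atTop N))).exists
  have hri' : (r : AddCircle y) = ((i * x : ℝ) : AddCircle y) := by
    rw [← nsmul_eq_mul]; exact hri
  obtain ⟨m, hm⟩ := QuotientAddGroup.eq_iff_sub_mem.1 hri'.symm
  have hm' : (m : ℝ) * y = i * x - r := by simpa using hm
  have hNm : (N : ℝ) < m := by
    have := hr.2
    exact lt_of_mul_lt_mul_right (by linarith) hy.le
  have hNm' : (N : ℤ) < m := by exact_mod_cast hNm
  lift m to ℕ using by omega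
  refine ⟨i, m, hNi, by omega, ?_⟩
  have : (i : ℝ) * x - (m : ℝ) * y = r := by push_cast at hm'; linarith
  rwa [this]

lemma exists_pow_div_pow_mem_Ioo {k l : ℕ} (hk : 2 ≤ k) (hl : 2 ≤ l) (hind : MultIndep k l)
    {a b : ℝ} (ha : 0 < a) (hab : a < b) (N : ℕ) :
    ∃ i j : ℕ, N ≤ i ∧ N ≤ j ∧ (k : ℝ) ^ i / (l : ℝ) ^ j ∈ Set.Ioo a b := by
  obtain ⟨i, j, hi, hj, h⟩ := exists_nat_mul_sub_nat_mul_mem_Ioo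
    (Real.log_pos (by exact_mod_cast hk)) (Real.log_pos (by exact_mod_cast hl))
    (irrational_log_div_log hk hl hind) (Real.log_lt_log ha hab) N
  have hk0 : (0 : ℝ) < (k : ℝ) ^ i := by positivity
  have hl0 : (0 : ℝ) < (l : ℝ) ^ j := by positivity
  rw [← Real.log_pow, ← Real.log_pow, ← Real.log_div hk0.ne' hl0.ne'] at h
  exact ⟨i, j, hi, hj, (Real.log_lt_log_iff ha (by positivity)).1 h.1,
    (Real.log_lt_log_iff (by positivity) (ha.trans hab)).1 h.2⟩

/-- The natural number whose base-`k` expansion, leading digit first, is `w`. -/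
def wordVal {k : ℕ} (w : List (Fin k)) : ℕ :=
  Nat.ofDigits k (w.map Fin.val).reverse

lemma wordVal_lt {k : ℕ} (hk : 2 ≤ k) (w : List (Fin k)) : wordVal w < k ^ w.length := by
  have := Nat.ofDigits_lt_base_pow_length (b := k) (l := (w.map Fin.val).reverse) hk (by simp)
  simpa using! this

lemma digits_wordVal {k : ℕ} (hk : 2 ≤ k) {w : List (Fin k)} (hw : w ≠ [])
    (hw0 : (w.head hw : ℕ) ≠ 0) : Nat.digits k (wordVal w) = (w.map Fin.val).reverse := by
  refine Nat.digits_ofDigits k hk _ (by simp) fun h => ?_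
  simpa [List.getLast_reverse, List.head_map] using hw0

lemma wordVal_pos {k : ℕ} (hk : 2 ≤ k) {w : List (Fin k)} (hw : w ≠ [])
    (hw0 : (w.head hw : ℕ) ≠ 0) : 0 < wordVal w := by
  refine Nat.pos_of_ne_zero fun h => hw ?_
  have := digits_wordVal hk hw hw0
  simpa [h] using this.symm

lemma map_val_kRepr {k : ℕ} (hk : 2 ≤ k) (n : ℕ) :
    (kRepr k n).map Fin.val = (Nat.digits k n).reverse := by
  have h : 1 < k := hk
  simp [kRepr, h, List.map_pmap]

/-- Numbers in `[U k^i, (U+1) k^i)` have base-`k` expansion beginning with that of `U`. -/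
lemma exists_digits_eq_append {k : ℕ} (hk : 2 ≤ k) {U : ℕ} (hU : 0 < U) {i m : ℕ}
    (hm : U * k ^ i ≤ m) (hm' : m < (U + 1) * k ^ i) :
    ∃ x, Nat.digits k m = x ++ Nat.digits k U := by
  obtain ⟨r, rfl⟩ := Nat.exists_eq_add_of_le hm
  have hr : r < k ^ i := by linarith
  have hlen : (Nat.digits k r).length ≤ i := (Nat.digits_length_le_iff hk r).2 hr
  refine ⟨Nat.digits k r ++ List.replicate (i - (Nat.digits k r).length) 0, ?_⟩
  rw [Nat.digits_append_zeroes_append_digits hk hU, Nat.add_sub_cancel' hlen]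
  congr 1; ring

lemma exists_kRepr_eq {k : ℕ} (hk : 2 ≤ k) {u : List (Fin k)} (hu : u ≠ [])
    (hu0 : (u.head hu : ℕ) ≠ 0) {z : Fin k} (hz : (z : ℕ) = 0) {s i n : ℕ} (hs : s ≤ i)
    (hdvd : k ^ s ∣ n) (hn : wordVal u * k ^ i ≤ n) (hn' : n < (wordVal u + 1) * k ^ i) :
    ∃ x, kRepr k n = u ++ x ++ List.replicate s z := by
  obtain ⟨m, rfl⟩ := hdvd
  have hU := wordVal_pos hk hu hu0
  have hks : 0 < k ^ s := by positivity
  obtain ⟨d, rfl⟩ := Nat.exists_eq_add_of_le hs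
  have hlow : wordVal u * k ^ d ≤ m := by
    refine Nat.le_of_mul_le_mul_left (le_of_eq_of_le ?_ hn) hks
    ring
  have hhigh : m < (wordVal u + 1) * k ^ d := by
    refine Nat.lt_of_mul_lt_mul_left (a := k ^ s) (hn'.trans_eq ?_)
    ring
  obtain ⟨x, hx⟩ := exists_digits_eq_append hk hU hlow hhigh
  have hmpos : 0 < m := lt_of_lt_of_le (by positivity) hlow
  have hrepr := map_val_kRepr hk (k ^ s * m)
  rw [Nat.digits_base_pow_mul hk hmpos, hx, digits_wordVal hk hu hu0] at hrepr
  simp only [List.reverse_append, List.reverse_reverse, List.reverse_replicate] at hrepr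
  obtain ⟨p, q, hpq, hp, hq⟩ := List.map_eq_append_iff.1 hrepr
  obtain ⟨p₁, p₂, rfl, hp₁, -⟩ := List.map_eq_append_iff.1 hp
  have hinj : Function.Injective (List.map (Fin.val : Fin k → ℕ)) :=
    List.map_injective_iff.2 Fin.val_injective
  have hq' : q = List.replicate s z := hinj (by rw [hq, List.map_replicate, hz])
  exact ⟨p₂, by rw [hpq, hinj hp₁, hq']⟩

/-- A set containing all multiples of `M` in `[L, R)` has at least `(R - L) / M - 1` elements
below `R`. -/
lemma le_card_of_multiples_mem {A : Set ℕ} {M L R : ℕ} (hM : 0 < M)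
    (hA : ∀ n, L ≤ n → n < R → M ∣ n → n ∈ A) :
    ((R : ℝ) - L) / M - 1 ≤ Nat.card ↥(A ∩ Set.Iio R) := by
  have hM' : (0 : ℝ) < M := by exact_mod_cast hM
  have hsub : (fun q => M * q) '' (Set.Ico ⌈(L : ℝ) / M⌉₊ ⌈(R : ℝ) / M⌉₊) ⊆ A ∩ Set.Iio R := by
    rintro _ ⟨q, ⟨hq, hq'⟩, rfl⟩
    have hLq : L ≤ M * q := by
      have := Nat.ceil_le.1 hq
      rw [div_le_iff₀ hM'] at this
      rw [mul_comm]; exact_mod_cast this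
    have hqR : M * q < R := by
      have := Nat.lt_ceil.1 hq'
      rw [lt_div_iff₀ hM'] at this
      rw [mul_comm]; exact_mod_cast this
    exact ⟨hA _ hLq hqR ⟨q, rfl⟩, hqR⟩
  have hcard := Set.ncard_le_ncard hsub ((Set.finite_Iio R).inter_of_right A)
  rw [Set.ncard_image_of_injective _ (mul_right_injective₀ hM.ne'),
    Set.ncard_eq_toFinset_card', Set.toFinset_Ico, Nat.card_Ico] at hcard
  rw [Nat.card_coe_set_eq]
  have hcard' : (⌈(R : ℝ) / M⌉₊ : ℝ) ≤ (A ∩ Set.Iio R).ncard + ⌈(L : ℝ) / M⌉₊ := by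
    exact_mod_cast Nat.sub_le_iff_le_add.1 hcard
  have hR := Nat.le_ceil ((R : ℝ) / M)
  have hL := Nat.ceil_lt_add_one (show (0 : ℝ) ≤ (L : ℝ) / M by positivity)
  rw [sub_div]
  linarith

lemma le_upperDensity {A : Set ℕ} {c : ℝ}
    (h : ∀ N : ℕ, ∃ n ≥ N, c ≤ (Nat.card ↥(A ∩ Set.Iio n) : ℝ) / n) : c ≤ upperDensity A := by
  refine le_limsup_of_frequently_le (frequently_atTop.2 h) ?_
  refine isBoundedUnder_of ⟨1, fun n => ?_⟩
  refine div_le_one_of_le₀ ?_ n.cast_nonneg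
  rw [Nat.card_coe_set_eq]
  have := Set.ncard_le_ncard (Set.inter_subset_right (s := A)) (Set.finite_Iio n)
  rw [Set.ncard_eq_toFinset_card' (Set.Iio n)] at this
  exact_mod_cast by simpa using this

/-- There are arbitrarily large `i, j` such that `[U k^i, (U+1) k^i)` and `[V l^j, (V+1) l^j)`
overlap in a fixed proportion of their right ends. -/
lemma exists_overlap {k l : ℕ} (hk : 2 ≤ k) (hl : 2 ≤ l) (hind : MultIndep k l)
    {U V a b : ℕ} (hU : 0 < U) (hV : 0 < V) (hUa : U < k ^ a) (hVb : V < l ^ b) (N : ℕ) :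
    ∃ i j L R : ℕ, N ≤ i ∧ N ≤ j ∧ N ≤ R ∧ U * k ^ i ≤ L ∧ R ≤ (U + 1) * k ^ i ∧
      V * l ^ j ≤ L ∧ R ≤ (V + 1) * l ^ j ∧ R + k ^ a * l ^ b * L ≤ k ^ a * l ^ b * R := by
  have hU' : (0 : ℝ) < U := by exact_mod_cast hU
  have hV' : (0 : ℝ) < V := by exact_mod_cast hV
  obtain ⟨i, j, hi, hj, hlow, hhigh⟩ := exists_pow_div_pow_mem_Ioo hk hl hind
    (a := V / U) (b := (2 * V + 1) / (2 * U)) (by positivity)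
    (by rw [div_lt_div_iff₀ (by positivity) (by positivity)]; nlinarith) N
  have hl0 : (0 : ℝ) < (l : ℝ) ^ j := by positivity
  rw [div_lt_div_iff₀ hU' hl0] at hlow
  rw [div_lt_div_iff₀ hl0 (by positivity)] at hhigh
  have hlow' : V * l ^ j < k ^ i * U := by exact_mod_cast hlow
  have hhigh' : k ^ i * (2 * U) < (2 * V + 1) * l ^ j := by exact_mod_cast hhigh
  have hki : i < k ^ i := Nat.lt_pow_self hk
  have hlj : j < l ^ j := Nat.lt_pow_self hl
  have hka : 2 ≤ k ^ a := by omega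
  have hlb : 2 ≤ l ^ b := by omega
  refine ⟨i, j, U * k ^ i, min ((U + 1) * k ^ i) ((V + 1) * l ^ j), hi, hj, ?_, le_rfl,
    min_le_left _ _, by linarith, min_le_right _ _, ?_⟩
  · refine le_min ?_ ?_
    · nlinarith
    · nlinarith
  · generalize k ^ a = p at *
    generalize l ^ b = q at *
    generalize k ^ i = X at *
    generalize l ^ j = Y at *
    rcases le_total ((U + 1) * X) ((V + 1) * Y) with h | h
    · rw [min_eq_left h]
      have : (U + 1) * X ≤ p * q * X := Nat.mul_le_mul_right _ (by nlinarith)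
      linarith
    · rw [min_eq_right h]
      have h₁ : (V + 1) * Y ≤ q * Y := Nat.mul_le_mul_right _ hVb
      have h₂ : q * (2 * (U * X) + Y) ≤ q * (2 * ((V + 1) * Y)) :=
        Nat.mul_le_mul_left _ (by linarith)
      have h₃ : U * X ≤ (V + 1) * Y := by nlinarith
      obtain ⟨D, hD⟩ := Nat.exists_eq_add_of_le h₃
      have h₄ : q * Y ≤ 2 * (q * D) := by rw [hD] at h₂; linarith
      have h₅ : 2 * (q * D) ≤ p * (q * D) := Nat.mul_le_mul_right _ hka
      calc (V + 1) * Y + p * q * (U * X) ≤ p * (q * D) + p * q * (U * X) := by omega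
        _ = p * q * ((V + 1) * Y) := by rw [hD]; ring

/-- The set of `n` whose base-`k` representation is of the form `u x 0^{t+1}` and
whose base-`l` representation is of the form `v y 0^{t+1}` has upper density at
least `ε / (1 + ε k^{t+1} l^{t+1}) > 0`, where
`ε = 1/(k^{|u|+t+2} l^{|v|+t+2})`. -/
theorem positive_density_doubly_prescribed (k l : ℕ) (hk : 2 ≤ k) (hl : 2 ≤ l)
    (hind : MultIndep k l)
    (u : List (Fin k)) (v : List (Fin l))
    (hu : u ≠ []) (hu0 : (u.head hu : ℕ) ≠ 0)
    (hv : v ≠ []) (hv0 : (v.head hv : ℕ) ≠ 0)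
    (t : ℕ) (z₀ : Fin k) (hz₀ : (z₀ : ℕ) = 0) (z₀' : Fin l) (hz₀' : (z₀' : ℕ) = 0)
    (A : Set ℕ)
    (hA : A = {n : ℕ |
      (∃ x : List (Fin k), kRepr k n = u ++ x ++ List.replicate (t + 1) z₀) ∧
      (∃ y : List (Fin l), kRepr l n = v ++ y ++ List.replicate (t + 1) z₀')})
    (ε : ℝ)
    (hε : ε = 1 / ((k : ℝ) ^ (u.length + t + 2) * (l : ℝ) ^ (v.length + t + 2))) :
    0 < upperDensity A ∧
      ε / (1 + ε * (k : ℝ) ^ (t + 1) * (l : ℝ) ^ (t + 1)) ≤ upperDensity A := by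
  have hU := wordVal_pos hk hu hu0
  have hV := wordVal_pos hl hv hv0
  have hεpos : 0 < ε := by rw [hε]; positivity
  have hden : 1 ≤ 1 + ε * (k : ℝ) ^ (t + 1) * (l : ℝ) ^ (t + 1) :=
    le_add_of_nonneg_right (by positivity)
  have hbound : ε ≤ upperDensity A := by
    refine le_upperDensity fun N => ?_
    set M := k ^ (t + 1) * l ^ (t + 1) with hMdef
    set P := k ^ u.length * l ^ v.length with hPdef
    have hM : 0 < M := by positivity
    have hP : 0 < P := by positivity
    obtain ⟨i, j, L, R, hi, hj, hR, hkL, hkR, hlL, hlR, hover⟩ := exists_overlap hk hl hind hU hV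
      (wordVal_lt hk u) (wordVal_lt hl v) (N + (t + 1) + 2 * (M * P))
    refine ⟨R, by omega, ?_⟩
    have hcard := le_card_of_multiples_mem (A := A) (L := L) (R := R) hM fun n hLn hnR hdvd => by
      rw [hA]
      exact ⟨exists_kRepr_eq hk hu hu0 hz₀ (by omega) ((Nat.dvd_mul_right _ _).trans hdvd)
          (hkL.trans hLn) (hnR.trans_le hkR),
        exists_kRepr_eq hl hv hv0 hz₀' (by omega) ((Nat.dvd_mul_left _ _).trans hdvd)
          (hlL.trans hLn) (hnR.trans_le hlR)⟩
    have hM' : (0 : ℝ) < M := by exact_mod_cast hM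
    have hP' : (0 : ℝ) < P := by exact_mod_cast hP
    have hRlarge : (2 : ℝ) * (M * P) ≤ R := by exact_mod_cast (by omega : 2 * (M * P) ≤ R)
    have hR0 : (0 : ℝ) < R := lt_of_lt_of_le (by positivity) hRlarge
    have hover' : (R : ℝ) + P * L ≤ P * R := by exact_mod_cast hover
    have hkl : (2 : ℝ) ≤ k * l := by
      exact_mod_cast (by nlinarith : 2 ≤ k * l)
    have hεle : ε ≤ 1 / (2 * (M * P)) := by
      have : (k : ℝ) ^ (u.length + t + 2) * (l : ℝ) ^ (v.length + t + 2) = k * l * (M * P) := by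
        rw [hMdef, hPdef]; push_cast; ring
      rw [hε, this]
      exact one_div_le_one_div_of_le (by positivity)
        (mul_le_mul_of_nonneg_right hkl (by positivity))
    refine hεle.trans ((le_div_iff₀ hR0).2 (le_trans ?_ hcard))
    have hmain : (R : ℝ) / (M * P) ≤ (R - L) / M := by
      rw [div_le_div_iff₀ (by positivity) hM']
      nlinarith
    have hone : 1 ≤ (R : ℝ) / (2 * (M * P)) := (one_le_div (by positivity)).2 hRlarge
    have hsplit : (R : ℝ) / (M * P) = R / (2 * (M * P)) + R / (2 * (M * P)) := by
      field_simp; norm_num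
    rw [one_div_mul_eq_div]
    linarith
  exact ⟨hεpos.trans_le hbound, (div_le_self hεpos.le hden).trans hbound⟩
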